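/- Let k ≥ 2 and 1 ≤ a ≤ k. For every n ≥ 0, the number of overpartitions of n with f_1 < a and f_i + f_{ī} + f_{i+1} < k for all i equals: (if a < k) the number of overpartitions of n whose non-overlined parts are not congruent to 0 or ±a mod 2k; (if a = k) the number of overpartitions of n with no part divisible by k. -/

import Mathlib

/-- An overpartition recorded by a pair of multiplicity functions:
`p.1 i` is the number of non-overlined occurrences of the part `i` and
`p.2 i ∈ {0, 1}` is the number of overlined occurrences of `i`.
There are no parts equal to `0`. -/
def IsOverPtn (p : (ℕ →₀ ℕ) × (ℕ →₀ ℕ)) : Prop :=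
  p.1 0 = 0 ∧ p.2 0 = 0 ∧ ∀ i, p.2 i ≤ 1

/-- The number of parts of an overpartition. -/
def opParts (p : (ℕ →₀ ℕ) × (ℕ →₀ ℕ)) : ℕ :=
  (p.1.sum fun _ v => v) + (p.2.sum fun _ v => v)

/-- The weight (number partitioned) of an overpartition. -/
def opWt (p : (ℕ →₀ ℕ) × (ℕ →₀ ℕ)) : ℕ :=
  (p.1.sum fun i v => i * v) + (p.2.sum fun i v => i * v)

/-- Conditions (i)-(iv) of Definition 1.6 (Kursungoz–Zadehdabbagh), with modulus `d`,
first index `N = dk + e` and second index `M = da + f`: writing `f_i = p.1 i`,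
`f_{ī} = p.2 i`,
(i) `f_1 ≤ M - 1 + (d-1) f_{1̄}`;
(ii) `f_{2l-1} ≥ (d-1) f_{\overline{2l-1}}`;
(iii) `f_{2l} + f_{\overline{2l}} ≡ 0 (mod d)`;
(iv) `f_l + f_{l̄} + f_{l+1} ≤ N - 1 + (d-1) f_{\overline{l+1}}` for all `l ≥ 1`. -/
def uCond (d N M : ℕ) (p : (ℕ →₀ ℕ) × (ℕ →₀ ℕ)) : Prop :=
  p.1 1 + 1 ≤ M + (d - 1) * p.2 1 ∧
  (∀ l : ℕ, (d - 1) * p.2 (2 * l + 1) ≤ p.1 (2 * l + 1)) ∧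
  (∀ l : ℕ, d ∣ p.1 (2 * l + 2) + p.2 (2 * l + 2)) ∧
  (∀ l : ℕ, 1 ≤ l → p.1 l + p.2 l + p.1 (l + 1) + 1 ≤ N + (d - 1) * p.2 (l + 1))

/-- Conditions (ī)-(iv̄): as `uCond` with the parity roles of odd and even parts
swapped in the second and third conditions. -/
def ubarCond (d N M : ℕ) (p : (ℕ →₀ ℕ) × (ℕ →₀ ℕ)) : Prop :=
  p.1 1 + 1 ≤ M + (d - 1) * p.2 1 ∧
  (∀ l : ℕ, (d - 1) * p.2 (2 * l + 2) ≤ p.1 (2 * l + 2)) ∧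
  (∀ l : ℕ, d ∣ p.1 (2 * l + 1) + p.2 (2 * l + 1)) ∧
  (∀ l : ℕ, 1 ≤ l → p.1 l + p.2 l + p.1 (l + 1) + 1 ≤ N + (d - 1) * p.2 (l + 1))

/-- `u_{N, M}(m, n)`: the number of overpartitions of `n` into `m` parts
satisfying conditions (i)-(iv). -/
noncomputable def uCount (d N M m n : ℕ) : ℕ :=
  Set.ncard {p : (ℕ →₀ ℕ) × (ℕ →₀ ℕ) |
    IsOverPtn p ∧ opParts p = m ∧ opWt p = n ∧ uCond d N M p}

/-- `ū_{N, M}(m, n)`: the number of overpartitions of `n` into `m` parts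
satisfying conditions (ī)-(iv̄). -/
noncomputable def ubarCount (d N M m n : ℕ) : ℕ :=
  Set.ncard {p : (ℕ →₀ ℕ) × (ℕ →₀ ℕ) |
    IsOverPtn p ∧ opParts p = m ∧ opWt p = n ∧ ubarCond d N M p}

/-- The two-variable generating function `U_{N,M}(x) = Σ u_{N,M}(m,n) x^m q^n`. -/
noncomputable def Ugf (d N M : ℕ) (x q : ℂ) : ℂ :=
  ∑' mn : ℕ × ℕ, (uCount d N M mn.1 mn.2 : ℂ) * x ^ mn.1 * q ^ mn.2

/-- The two-variable generating function `Ū_{N,M}(x) = Σ ū_{N,M}(m,n) x^m q^n`. -/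
noncomputable def UbarGf (d N M : ℕ) (x q : ℂ) : ℂ :=
  ∑' mn : ℕ × ℕ, (ubarCount d N M mn.1 mn.2 : ℂ) * x ^ mn.1 * q ^ mn.2

/-- The infinite q-Pochhammer symbol `(a; q)_∞ = ∏_{j ≥ 0} (1 - a q^j)`. -/
noncomputable def qPochInf (a q : ℂ) : ℂ := ∏' j : ℕ, (1 - a * q ^ j)

/-- The finite q-Pochhammer symbol `(a; q)_n = ∏_{j=0}^{n-1} (1 - a q^j)`. -/
noncomputable def qPochFin (a q : ℂ) (n : ℕ) : ℂ := ∏ j ∈ Finset.range n, (1 - a * q ^ j)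

/-!
Fix `k` and let `G m i` be the generating function of the overpartitions with all parts greater than
`m`, fewer than `i` non-overlined parts `m + 1`, and `f_j + f_{j̄} + f_{j+1} < k` for all `j`.
Removing the parts `m + 1` expresses `G m (i + 1) - G m i` through `G (m + 1) (k - i)` and
`G (m + 1) (k - i - 1)`, and Andrews's `q`-hypergeometric series `J_{k,i}` at `x = X ^ m` satisfies
the same recurrence. Passing from `m` to `m + 1` gains a power of `X`, so the solutions are
determined by their behaviour as `m` grows and `G m i` is proportional to `J_{k,i}`. At `m = 0` the
series `J_{k,a}` is a theta function, and the Jacobi triple product turns it into the product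
generating function of the overpartitions with restricted parts.
-/

open Filter Topology PowerSeries
open scoped PowerSeries.WithPiTopology

section XAdic

variable {R : Type*} [CommRing R]

theorem eq_of_forall_X_pow_dvd_sub {f g : R⟦X⟧} (h : ∀ n, X ^ n ∣ f - g) : f = g := by
  ext n
  simpa [sub_eq_zero] using X_pow_dvd_iff.1 (h (n + 1)) n n.lt_succ_self

theorem isUnit_one_add_of_X_dvd {f : R⟦X⟧} (hf : X ∣ f) : IsUnit (1 + f) := by
  simp [isUnit_iff_constantCoeff, X_dvd_iff.1 hf]

variable [TopologicalSpace R]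

theorem summable_of_X_pow_dvd {ι : Type*} {f : ι → R⟦X⟧} {e : ι → ℕ}
    (he : Tendsto e cofinite atTop) (h : ∀ i, X ^ e i ∣ f i) : Summable f := by
  refine (WithPiTopology.summable_iff_summable_coeff R).2 fun n => summable_of_hasFiniteSupport ?_
  refine (he.eventually_gt_atTop n).mono fun i hi => ?_
  simpa using X_pow_dvd_iff.1 (h i) n hi

theorem tendsto_of_X_pow_dvd_sub {f : ℕ → R⟦X⟧} {g : R⟦X⟧} (h : ∀ n, X ^ n ∣ f n - g) :
    Tendsto f atTop (𝓝 g) := by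
  refine (WithPiTopology.tendsto_iff_coeff_tendsto R f atTop g).2 fun d => ?_
  refine tendsto_const_nhds.congr' ?_
  filter_upwards [eventually_gt_atTop d] with n hn
  exact (sub_eq_zero.1 (by simpa using X_pow_dvd_iff.1 (h n) d hn)).symm

theorem multipliable_one_add_of_X_pow_dvd {ι : Type*} {f : ι → R⟦X⟧} {e : ι → ℕ}
    (he : Tendsto e cofinite atTop) (h : ∀ i, X ^ e i ∣ f i) : Multipliable fun i => 1 + f i := by
  have hsup : Tendsto (fun s : Finset ι => s.sup e) cofinite atTop := by
    refine tendsto_atTop.2 fun n => ?_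
    have hn : {i | ¬ n ≤ e i}.Finite := he.eventually_ge_atTop n
    refine hn.toFinset.powerset.finite_toSet.subset fun s hs => ?_
    simp only [Finset.mem_coe, Finset.mem_powerset]
    exact fun i hi => hn.mem_toFinset.2 fun h' => hs (h'.trans (Finset.le_sup hi))
  refine multipliable_one_add_of_summable_prod (summable_of_X_pow_dvd hsup fun s => ?_)
  rcases s.eq_empty_or_nonempty with rfl | hs
  · simp
  · obtain ⟨i, hi, hsup_eq⟩ := s.exists_mem_eq_sup hs e
    exact hsup_eq ▸ (h i).trans (Finset.dvd_prod_of_mem f hi)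

variable [T2Space R]

theorem isClosed_setOf_X_pow_dvd_sub (n : ℕ) (g : R⟦X⟧) : IsClosed {f | X ^ n ∣ f - g} := by
  simp only [X_pow_dvd_iff, map_sub, sub_eq_zero, Set.ofPred_forall]
  exact isClosed_iInter fun m => isClosed_iInter fun _ =>
    isClosed_singleton.preimage (WithPiTopology.continuous_coeff R m)

theorem X_pow_dvd_tsum {ι : Type*} {f : ι → R⟦X⟧} {n : ℕ} (hf : Summable f)
    (h : ∀ i, X ^ n ∣ f i) : X ^ n ∣ ∑' i, f i := by
  simpa using (isClosed_setOf_X_pow_dvd_sub n 0).mem_of_tendsto hf.hasSum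
    (.of_forall fun _ => by simpa using Finset.dvd_sum fun i _ => h i)

theorem X_pow_dvd_tprod_one_add_sub_one {ι : Type*} {f : ι → R⟦X⟧} {n : ℕ}
    (hf : Multipliable fun i => 1 + f i) (h : ∀ i, X ^ n ∣ f i) :
    X ^ n ∣ ∏' i, (1 + f i) - 1 := by
  refine (isClosed_setOf_X_pow_dvd_sub n 1).mem_of_tendsto hf.hasProd (.of_forall fun s => ?_)
  refine Finset.prod_induction (fun i => 1 + f i) (fun g => X ^ n ∣ g - 1) (fun g g' hg hg' => ?_)
    (by simp) fun i _ => by simpa using h i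
  simpa [mul_sub] using dvd_add (hg'.mul_left g) hg

end XAdic

section QProd

variable {R : Type*} [CommRing R] [TopologicalSpace R]

/-- The infinite `q`-product `(-a; q)_∞ = ∏_{j ≥ 0} (1 + a q ^ j)`, as a power series. -/
noncomputable def qProd (a q : R⟦X⟧) : R⟦X⟧ := ∏' j : ℕ, (1 + a * q ^ j)

variable {a q : R⟦X⟧}

theorem multipliable_qProd (a : R⟦X⟧) (hq : X ∣ q) : Multipliable fun j : ℕ => 1 + a * q ^ j :=
  multipliable_one_add_of_X_pow_dvd (Nat.cofinite_eq_atTop ▸ tendsto_id) fun j =>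
    (pow_dvd_pow_of_dvd hq j).mul_left a

variable [T2Space R]

theorem X_pow_dvd_qProd_sub_one {n : ℕ} (hq : X ∣ q) (ha : X ^ n ∣ a) : X ^ n ∣ qProd a q - 1 :=
  X_pow_dvd_tprod_one_add_sub_one (multipliable_qProd a hq) fun _ => ha.mul_right _

theorem isUnit_qProd (hq : X ∣ q) (ha : X ∣ a) : IsUnit (qProd a q) := by
  have h : X ∣ qProd a q - 1 := by
    simpa using X_pow_dvd_qProd_sub_one (n := 1) hq (by simpa using ha)
  simpa using isUnit_one_add_of_X_dvd h

variable [IsTopologicalRing R]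

theorem prod_range_mul_qProd (n : ℕ) (a : R⟦X⟧) (hq : X ∣ q) :
    (∏ j ∈ Finset.range n, (1 + a * q ^ j)) * qProd (a * q ^ n) q = qProd a q := by
  have h (j : ℕ) : 1 + a * q ^ n * q ^ j = 1 + a * q ^ (j + n) := by ring
  have hm := multipliable_qProd (a * q ^ n) hq
  simp only [qProd, h] at hm ⊢
  exact hm.prod_mul_tprod_nat_mul' (f := fun j => 1 + a * q ^ j)

theorem one_add_mul_qProd (a : R⟦X⟧) (hq : X ∣ q) : (1 + a) * qProd (a * q) q = qProd a q := by
  simpa using prod_range_mul_qProd 1 a hq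

theorem qProd_mul_qProd_neg (a : R⟦X⟧) (hq : X ∣ q) :
    qProd a q * qProd (-a) q = qProd (-a ^ 2) (q ^ 2) := by
  rw [qProd, qProd, ← (multipliable_qProd a hq).tprod_mul (multipliable_qProd (-a) hq), qProd]
  exact tprod_congr fun j => by ring

theorem qProd_mul_qProd_mul_self (a : R⟦X⟧) (hq : X ∣ q) :
    qProd a (q ^ 2) * qProd (a * q) (q ^ 2) = qProd a q := by
  have h0 := multipliable_qProd a (dvd_pow hq two_ne_zero)
  have h1 := multipliable_qProd (a * q) (dvd_pow hq two_ne_zero)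
  simp only [qProd, mul_assoc, ← pow_succ', ← pow_mul] at h0 h1 ⊢
  exact tprod_even_mul_odd (f := fun j => 1 + a * q ^ j) h0 h1

theorem qProd_self_mul_qProd_neg_self_sq (hq : X ∣ q) : qProd q q * qProd (-q) (q ^ 2) = 1 := by
  have hq2 : X ∣ q ^ 2 := dvd_pow hq two_ne_zero
  have h : qProd q q * qProd (-q) q = qProd (-q * q) (q ^ 2) := by
    rw [qProd_mul_qProd_neg q hq, neg_mul, sq]
  rw [← qProd_mul_qProd_mul_self (-q) hq] at h
  refine (isUnit_qProd hq2 (dvd_mul_of_dvd_right hq (-q))).mul_right_cancel ?_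
  rw [mul_assoc, h, one_mul]

end QProd

section RamanujanTheta

theorem tendsto_intNatAbs_cofinite_atTop : Tendsto Int.natAbs cofinite atTop := by
  rw [← Nat.cofinite_eq_atTop]
  refine Tendsto.cofinite_of_finite_preimage_singleton fun n => ?_
  exact ((Set.finite_Icc (-(n : ℤ)) n).subset fun m (hm : m.natAbs = n) =>
    Set.mem_Icc.2 (by omega))

/-- The triangular number `n * (n + 1) / 2`, for every integer `n`. -/
def triangular (n : ℤ) : ℕ := (n * (n + 1) / 2).toNat

theorem two_mul_triangular (n : ℤ) : 2 * (triangular n : ℤ) = n * (n + 1) := by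
  have h : 0 ≤ n * (n + 1) := by
    rcases le_or_gt 0 n with h | h
    · positivity
    · nlinarith
  rw [triangular, Int.toNat_of_nonneg (Int.ediv_nonneg h zero_le_two),
    Int.mul_ediv_cancel' (Int.even_mul_succ_self n).two_dvd]

theorem triangular_add_triangular_neg (n : ℤ) :
    (triangular n + triangular (-n) : ℤ) = n ^ 2 := by
  linarith [two_mul_triangular n, two_mul_triangular (-n)]

theorem natAbs_le_triangular_add_triangular_neg (n : ℤ) :
    n.natAbs ≤ triangular n + triangular (-n) := by
  zify
  rw [triangular_add_triangular_neg, ← sq_abs]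
  exact Int.le_self_sq |n|

variable {R : Type*} [CommRing R]

/-- The summand `u ^ (n (n + 1) / 2) * v ^ (n (n - 1) / 2)` of Ramanujan's theta function. -/
noncomputable def thetaTerm (u v : R⟦X⟧) (n : ℤ) : R⟦X⟧ := u ^ triangular n * v ^ triangular (-n)

variable {u v : R⟦X⟧}

theorem thetaTerm_neg (n : ℤ) : thetaTerm u v (-n) = thetaTerm v u n := by
  rw [thetaTerm, thetaTerm, neg_neg, mul_comm]

theorem thetaTerm_neg_X_pow {a b e : ℕ} {n : ℤ}
    (h : a * triangular n + b * triangular (-n) = e) :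
    thetaTerm (-X ^ a) (-X ^ b : R⟦X⟧) n = (-1) ^ n.natAbs * X ^ e := by
  have hn : triangular n + triangular (-n) = n.natAbs ^ 2 := by
    zify
    rw [triangular_add_triangular_neg, sq_abs]
  have hsign : (-1 : R⟦X⟧) ^ (triangular n + triangular (-n)) = (-1) ^ n.natAbs := by
    rw [hn, sq, pow_mul]
    rcases neg_one_pow_eq_or R⟦X⟧ n.natAbs with h | h <;> simp [h]
  rw [thetaTerm, neg_pow, neg_pow (X ^ b), ← hsign, ← h]
  ring

theorem mul_thetaTerm_sub_one (u v : R⟦X⟧) {n : ℤ} {a x : ℕ} (h : a + 1 - n = x) :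
    u * (u * v) ^ a * thetaTerm u v (n - 1) = (u * v) ^ x * thetaTerm u v n := by
  have h₁ := two_mul_triangular n
  have h₂ := two_mul_triangular (n - 1)
  have h₃ := two_mul_triangular (-n)
  have h₄ := two_mul_triangular (-(n - 1))
  have hu : 1 + a + triangular (n - 1) = x + triangular n := by zify; linarith
  have hv : a + triangular (-(n - 1)) = x + triangular (-n) := by zify; linarith
  calc u * (u * v) ^ a * thetaTerm u v (n - 1)
      = u ^ (1 + a + triangular (n - 1)) * v ^ (a + triangular (-(n - 1))) := by
        rw [thetaTerm]; ring
    _ = (u * v) ^ x * thetaTerm u v n := by rw [hu, hv, thetaTerm]; ring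

theorem X_pow_natAbs_dvd_thetaTerm (hu : X ∣ u) (hv : X ∣ v) (n : ℤ) :
    X ^ n.natAbs ∣ thetaTerm u v n := by
  refine (pow_dvd_pow X (natAbs_le_triangular_add_triangular_neg n)).trans ?_
  rw [pow_add]
  exact mul_dvd_mul (pow_dvd_pow_of_dvd hu _) (pow_dvd_pow_of_dvd hv _)

variable [TopologicalSpace R]

/-- Ramanujan's theta function `f(u, v) = ∑ u ^ (n (n + 1) / 2) * v ^ (n (n - 1) / 2)`, the sum
being over all integers `n`. -/
noncomputable def ramanujanTheta (u v : R⟦X⟧) : R⟦X⟧ := ∑' n, thetaTerm u v n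

theorem summable_mul_thetaTerm (hu : X ∣ u) (hv : X ∣ v) (w : ℤ → R⟦X⟧) :
    Summable fun n => w n * thetaTerm u v n :=
  summable_of_X_pow_dvd tendsto_intNatAbs_cofinite_atTop fun n =>
    (X_pow_natAbs_dvd_thetaTerm hu hv n).mul_left _

/-- The product `(q ^ (m + 1); q)_∞` for an integer `m`, which vanishes for `m < 0`. -/
noncomputable def eulerTail (q : R⟦X⟧) : ℤ → R⟦X⟧
  | (m : ℕ) => qProd (-q ^ (m + 1)) q
  | .negSucc _ => 0

theorem eulerTail_of_neg (q : R⟦X⟧) {m : ℤ} (hm : m < 0) : eulerTail q m = 0 := by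
  obtain ⟨m, rfl⟩ := Int.eq_negSucc_of_lt_zero hm
  rfl

/-- A bilateral sum interpolating between a product of `a` factors `1 + u (uv) ^ j` and `b`
factors `1 + v (uv) ^ j` and, for large `a` and `b`, Ramanujan's theta function. -/
noncomputable def tripleProductSum (u v : R⟦X⟧) (a b : ℕ) : R⟦X⟧ :=
  ∑' n : ℤ, eulerTail (u * v) (a - n) * eulerTail (u * v) (b + n) * thetaTerm u v n

theorem tripleProductSum_swap (u v : R⟦X⟧) (a b : ℕ) :
    tripleProductSum u v a b = tripleProductSum v u b a := by
  rw [tripleProductSum, tripleProductSum, ← (Equiv.neg ℤ).tsum_eq]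
  refine tsum_congr fun n => ?_
  rw [Equiv.neg_apply, thetaTerm_neg, sub_neg_eq_add, ← sub_eq_add_neg, mul_comm v u]
  ring

theorem tripleProductSum_zero_zero (u v : R⟦X⟧) :
    tripleProductSum u v 0 0 = eulerTail (u * v) 0 * eulerTail (u * v) 0 := by
  rw [tripleProductSum, tsum_eq_single 0 fun n hn => ?_]
  · simp [thetaTerm, triangular]
  rcases hn.lt_or_gt with h | h
  · simp [eulerTail_of_neg _ h]
  · simp [eulerTail_of_neg _ (neg_lt_zero.2 h)]

variable [T2Space R]

theorem X_pow_dvd_eulerTail_sub_one {q : R⟦X⟧} (hq : X ∣ q) (m : ℕ) :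
    X ^ (m + 1) ∣ eulerTail q m - 1 :=
  X_pow_dvd_qProd_sub_one hq (pow_dvd_pow_of_dvd hq _).neg_right

variable [IsTopologicalRing R]

theorem eulerTail_sub_one {q : R⟦X⟧} (hq : X ∣ q) (m : ℕ) :
    eulerTail q (m - 1) = (1 - q ^ m) * eulerTail q m := by
  cases m with
  | zero => simp [eulerTail_of_neg]
  | succ m =>
    have h := one_add_mul_qProd (-q ^ (m + 1)) hq
    rw [neg_mul, ← pow_succ, ← sub_eq_add_neg] at h
    rw [Nat.cast_succ, add_sub_cancel_right]
    exact h.symm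

variable {u v : R⟦X⟧}

theorem eulerTail_mul_thetaTerm_add (hu : X ∣ u) (a b : ℕ) (n : ℤ) :
    eulerTail (u * v) (a - n) * eulerTail (u * v) (b + n) * thetaTerm u v n +
      u * (u * v) ^ a * (eulerTail (u * v) (a - (n - 1)) * eulerTail (u * v) (b + (n - 1)) *
        thetaTerm u v (n - 1)) =
      (1 - (u * v) ^ (a + b + 1)) * (eulerTail (u * v) ((a + 1 : ℕ) - n) *
        eulerTail (u * v) (b + n) * thetaTerm u v n) := by
  have hq : X ∣ u * v := hu.mul_right v
  rcases lt_or_ge ((a : ℤ) + 1 - n) 0 with h | h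
  · have h' : (a : ℤ) - n < 0 := by omega
    have h'' : (a : ℤ) - (n - 1) < 0 := by omega
    push_cast
    simp [eulerTail_of_neg _ h, eulerTail_of_neg _ h', eulerTail_of_neg _ h'']
  rcases lt_or_ge (b + n) 0 with h' | h'
  · have h'' : b + (n - 1) < 0 := by omega
    simp [eulerTail_of_neg _ h', eulerTail_of_neg _ h'']
  obtain ⟨x, hx⟩ := Int.eq_ofNat_of_zero_le h
  obtain ⟨y, hy⟩ := Int.eq_ofNat_of_zero_le h'
  have hxy : x + y = a + b + 1 := by omega
  rw [show (a : ℤ) - n = x - 1 by omega, show (a : ℤ) - (n - 1) = x by omega, hy,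
    show b + (n - 1) = (y : ℤ) - 1 by omega, show ((a + 1 : ℕ) : ℤ) - n = x by push_cast; omega,
    eulerTail_sub_one hq, eulerTail_sub_one hq, ← hxy]
  linear_combination eulerTail (u * v) x * ((1 - (u * v) ^ y) * eulerTail (u * v) y) *
    mul_thetaTerm_sub_one u v hx

theorem one_add_mul_tripleProductSum (hu : X ∣ u) (hv : X ∣ v) (a b : ℕ) :
    (1 + u * (u * v) ^ a) * tripleProductSum u v a b =
      (1 - (u * v) ^ (a + b + 1)) * tripleProductSum u v (a + 1) b := by
  have hs (a b : ℕ) : Summable fun n : ℤ =>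
      eulerTail (u * v) (a - n) * eulerTail (u * v) (b + n) * thetaTerm u v n :=
    summable_mul_thetaTerm hu hv _
  have hs' : Summable fun n : ℤ => eulerTail (u * v) (a - (n - 1)) *
      eulerTail (u * v) (b + (n - 1)) * thetaTerm u v (n - 1) :=
    (Equiv.subRight (1 : ℤ)).summable_iff.2 (hs a b)
  rw [add_mul, one_mul, tripleProductSum, tripleProductSum, ← (hs (a + 1) b).tsum_mul_left]
  nth_rw 2 [← (Equiv.subRight (1 : ℤ)).tsum_eq]
  simp only [Equiv.subRight_apply]
  rw [← hs'.tsum_mul_left, ← (hs a b).tsum_add (hs'.mul_left _)]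
  exact tsum_congr (eulerTail_mul_thetaTerm_add hu a b)

theorem eulerTail_mul_prod_succ (hu : X ∣ u) (hv : X ∣ v) {a b : ℕ}
    (h : eulerTail (u * v) (a + b) * eulerTail (u * v) 0 *
      (∏ j ∈ Finset.range a, (1 + u * (u * v) ^ j)) *
      (∏ j ∈ Finset.range b, (1 + v * (u * v) ^ j)) = tripleProductSum u v a b) :
    eulerTail (u * v) ((a + 1 : ℕ) + b) * eulerTail (u * v) 0 *
      (∏ j ∈ Finset.range (a + 1), (1 + u * (u * v) ^ j)) *
      (∏ j ∈ Finset.range b, (1 + v * (u * v) ^ j)) = tripleProductSum u v (a + 1) b := by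
  have hq : X ∣ u * v := hu.mul_right v
  have hunit : IsUnit (1 - (u * v) ^ (a + b + 1)) := by
    rw [sub_eq_add_neg]
    exact isUnit_one_add_of_X_dvd (dvd_pow hq (a + b).succ_ne_zero).neg_right
  have ht := eulerTail_sub_one hq (a + b + 1)
  rw [show ((a + b + 1 : ℕ) : ℤ) - 1 = a + b by push_cast; ring] at ht
  refine hunit.mul_left_cancel ?_
  rw [← one_add_mul_tripleProductSum hu hv, ← h, ht, Finset.prod_range_succ,
    show ((a + 1 : ℕ) : ℤ) + b = (a + b + 1 : ℕ) by push_cast; ring]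
  ring

theorem eulerTail_mul_prod_eq_tripleProductSum (hu : X ∣ u) (hv : X ∣ v) (a b : ℕ) :
    eulerTail (u * v) (a + b) * eulerTail (u * v) 0 *
      (∏ j ∈ Finset.range a, (1 + u * (u * v) ^ j)) *
      (∏ j ∈ Finset.range b, (1 + v * (u * v) ^ j)) = tripleProductSum u v a b := by
  induction a with
  | zero =>
    induction b with
    | zero => simp [tripleProductSum_zero_zero]
    | succ b ih =>
      rw [tripleProductSum_swap] at ih ⊢
      have h := eulerTail_mul_prod_succ hv hu (a := b) (b := 0) (by simpa [mul_comm v u] using ih)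
      simpa [mul_comm v u] using h
  | succ a ih => exact eulerTail_mul_prod_succ hu hv ih

theorem X_pow_dvd_tripleProductSum_sub_ramanujanTheta (hu : X ∣ u) (hv : X ∣ v) (n : ℕ) :
    X ^ n ∣ tripleProductSum u v n n - ramanujanTheta u v := by
  have hq : X ∣ u * v := hu.mul_right v
  have hs (w : ℤ → R⟦X⟧) := summable_mul_thetaTerm hu hv w
  have hθ := hs 1
  simp only [Pi.one_apply, one_mul] at hθ
  rw [tripleProductSum, ramanujanTheta, ← (hs _).tsum_sub hθ]
  simp only [← sub_one_mul]
  refine X_pow_dvd_tsum (hs _) fun m => ?_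
  refine (pow_dvd_pow X (show n ≤ n - m.natAbs + m.natAbs by omega)).trans ?_
  rw [pow_add]
  refine mul_dvd_mul ?_ (X_pow_natAbs_dvd_thetaTerm hu hv m)
  rcases le_or_gt n m.natAbs with h | h
  · simp [Nat.sub_eq_zero_of_le h]
  have ht {l : ℕ} (hl : n - m.natAbs ≤ l) : X ^ (n - m.natAbs) ∣ eulerTail (u * v) l - 1 :=
    (pow_dvd_pow X (by omega)).trans (X_pow_dvd_eulerTail_sub_one hq l)
  lift (n : ℤ) - m to ℕ using by omega with x hx
  lift (n : ℤ) + m to ℕ using by omega with y hy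
  convert dvd_add ((ht (l := x) (by omega)).mul_right (eulerTail (u * v) y))
    (ht (l := y) (by omega)) using 1
  ring

/-- The Jacobi triple product identity. -/
theorem qProd_mul_qProd_mul_qProd_eq_ramanujanTheta (hu : X ∣ u) (hv : X ∣ v) :
    qProd u (u * v) * qProd v (u * v) * qProd (-(u * v)) (u * v) = ramanujanTheta u v := by
  have hq : X ∣ u * v := hu.mul_right v
  have hθ := tendsto_of_X_pow_dvd_sub (X_pow_dvd_tripleProductSum_sub_ramanujanTheta hu hv)
  have ht : Tendsto (fun n : ℕ => eulerTail (u * v) (n + n)) atTop (𝓝 1) :=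
    tendsto_of_X_pow_dvd_sub fun n =>
      (pow_dvd_pow X (by omega)).trans (X_pow_dvd_eulerTail_sub_one hq (n + n))
  have hprod (w : R⟦X⟧) := (multipliable_qProd w hq).hasProd.tendsto_prod_nat
  have h0 : eulerTail (u * v) 0 = qProd (-(u * v)) (u * v) := by
    change qProd (-(u * v) ^ (0 + 1)) (u * v) = _
    rw [zero_add, pow_one]
  have := ((ht.mul_const (eulerTail (u * v) 0)).mul (hprod u)).mul (hprod v)
  simp only [eulerTail_mul_prod_eq_tripleProductSum hu hv] at this
  rw [tendsto_nhds_unique hθ this, h0, qProd, qProd]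
  ring

theorem qProd_mul_ramanujanTheta_neg_self {q : R⟦X⟧} (hq : X ∣ q) :
    qProd q q * ramanujanTheta (-q) (-q) = qProd (-q) q := by
  have htriple := qProd_mul_qProd_mul_qProd_eq_ramanujanTheta hq.neg_right hq.neg_right
  have hsplit := qProd_mul_qProd_mul_self (-q) hq
  rw [neg_mul_neg, mul_assoc, ← neg_mul, ← sq, hsplit] at htriple
  rw [← htriple, ← mul_assoc, qProd_self_mul_qProd_neg_self_sq hq, one_mul]

end RamanujanTheta

section GordonSeries

variable {R : Type*} [CommRing R]

/-- The quotient `(q ^ (n + 1); q)_m / (-q ^ (n + 1); q)_m` of finite `q`-products at `q = X`. -/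
noncomputable def pochhammerRatio (R : Type*) [CommRing R] (m n : ℕ) : R⟦X⟧ :=
  ∏ j ∈ Finset.range m, (1 - X ^ (n + j + 1)) * invOfUnit (1 + X ^ (n + j + 1)) 1

theorem one_add_X_pow_mul_invOfUnit (j : ℕ) :
    (1 + X ^ (j + 1) : R⟦X⟧) * invOfUnit (1 + X ^ (j + 1)) 1 = 1 :=
  mul_invOfUnit _ _ (by simp)

theorem pochhammerRatio_succ_mul (m n : ℕ) :
    pochhammerRatio R (m + 1) n * (1 + X ^ (n + m + 1)) =
      pochhammerRatio R m n * (1 - X ^ (n + m + 1)) := by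
  rw [pochhammerRatio, Finset.prod_range_succ, ← pochhammerRatio]
  linear_combination pochhammerRatio R m n * (1 - X ^ (n + m + 1)) *
    one_add_X_pow_mul_invOfUnit (R := R) (n + m)

theorem pochhammerRatio_succ_mul' (m n : ℕ) :
    pochhammerRatio R (m + 1) n * (1 + X ^ (n + 1)) =
      pochhammerRatio R m (n + 1) * (1 - X ^ (n + 1)) := by
  have h : pochhammerRatio R (m + 1) n =
      pochhammerRatio R m (n + 1) * ((1 - X ^ (n + 1)) * invOfUnit (1 + X ^ (n + 1)) 1) := by
    rw [pochhammerRatio, Finset.prod_range_succ', pochhammerRatio]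
    simp only [add_zero, add_assoc, add_comm 1]
  rw [h]
  linear_combination pochhammerRatio R m (n + 1) * (1 - X ^ (n + 1)) *
    one_add_X_pow_mul_invOfUnit (R := R) n

theorem pochhammerRatio_mul_prod (m n : ℕ) :
    pochhammerRatio R m n * ∏ j ∈ Finset.range m, (1 + X ^ (n + j + 1)) =
      ∏ j ∈ Finset.range m, (1 - X ^ (n + j + 1)) := by
  rw [pochhammerRatio, ← Finset.prod_mul_distrib]
  refine Finset.prod_congr rfl fun j _ => ?_
  rw [mul_assoc, mul_comm (invOfUnit _ _), one_add_X_pow_mul_invOfUnit, mul_one]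

/-- The `n`-th summand of `gordonSeries`. -/
noncomputable def gordonTerm (R : Type*) [CommRing R] (m i c n : ℕ) : R⟦X⟧ :=
  (-1) ^ n * X ^ (n * (m * (i + c) + (i + c) * n + c)) * (1 - X ^ ((m + 1 + 2 * n) * i)) *
    pochhammerRatio R m n

theorem gordonTerm_zero (m c n : ℕ) : gordonTerm R m 0 c n = 0 := by
  simp [gordonTerm]

theorem X_pow_dvd_gordonTerm (m i c n : ℕ) : X ^ n ∣ gordonTerm R m i c n := by
  rcases Nat.eq_zero_or_pos i with rfl | hi
  · simp [gordonTerm_zero]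
  have h : n ≤ n * (m * (i + c) + (i + c) * n + c) := by
    rcases Nat.eq_zero_or_pos n with rfl | hn
    · simp
    · exact Nat.le_mul_of_pos_right n (by positivity)
  exact (((pow_dvd_pow X h).mul_left _).mul_right _).mul_right _

/-- The sequence whose consecutive differences are the defect in the recurrence `gordonTerm_succ`
for `gordonTerm`. -/
noncomputable def gordonPrimitive (R : Type*) [CommRing R] (m k c n : ℕ) : R⟦X⟧ :=
  (-1) ^ n * X ^ (n * (m * k + k * n + c)) * (1 - X ^ n) * pochhammerRatio R m n

theorem gordonTerm_succ (m i c n : ℕ) :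
    gordonTerm R m (i + 1) c n = gordonTerm R m i (c + 1) n +
      X ^ ((m + 1) * i) * (gordonTerm R (m + 1) (c + 1) i n +
        X ^ (m + 1) * gordonTerm R (m + 1) c (i + 1) n) +
      (gordonPrimitive R m (i + c + 1) c n - gordonPrimitive R m (i + c + 1) c (n + 1)) := by
  simp only [gordonTerm, gordonPrimitive]
  linear_combination
    -((-1) ^ (n + 1) * X ^ ((n + 1) * (m * (i + c + 1) + (i + c + 1) * (n + 1) + c))) *
      pochhammerRatio_succ_mul' (R := R) m n -
    (-1) ^ n * X ^ (n * (m * (i + c + 1) + (i + c + 1) * n + c + 1) + (m + 1 + 2 * n) * i) *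
      pochhammerRatio_succ_mul (R := R) m n

theorem X_pow_dvd_gordonTerm_succ (m : ℕ) {i : ℕ} (c n : ℕ) (hi : 0 < i) :
    X ^ (m + 1) ∣ gordonTerm R m i c (n + 1) := by
  have h₁ : m ≤ m * (i + c) := Nat.le_mul_of_pos_right m (by omega)
  have h₂ : 0 < (i + c) * (n + 1) := by positivity
  have h : m + 1 ≤ (n + 1) * (m * (i + c) + (i + c) * (n + 1) + c) :=
    le_mul_of_one_le_of_le n.succ_pos (by omega)
  exact (((pow_dvd_pow X h).mul_left _).mul_right _).mul_right _

theorem X_pow_dvd_gordonPrimitive (m k c n : ℕ) :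
    X ^ n ∣ gordonPrimitive R m (k + 1) c n := by
  have h : n ≤ n * (m * (k + 1) + (k + 1) * n + c) := by
    rcases Nat.eq_zero_or_pos n with rfl | hn
    · simp
    · exact Nat.le_mul_of_pos_right n (by positivity)
  exact (((pow_dvd_pow X h).mul_left _).mul_right _).mul_right _

variable [TopologicalSpace R]

/-- Andrews's series `J_{k,i}` for overpartitions at `x = X ^ m`, where `k = i + c`, normalised so
that it equals `(X; X)_m / (-X; X)_m` up to higher order terms. -/
noncomputable def gordonSeries (R : Type*) [CommRing R] [TopologicalSpace R] (m i c : ℕ) : R⟦X⟧ :=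
  ∑' n, gordonTerm R m i c n

theorem gordonSeries_zero (m c : ℕ) : gordonSeries R m 0 c = 0 := by
  simp [gordonSeries, gordonTerm_zero]

theorem summable_gordonTerm (m i c : ℕ) : Summable (gordonTerm R m i c) :=
  summable_of_X_pow_dvd (Nat.cofinite_eq_atTop ▸ tendsto_id) (X_pow_dvd_gordonTerm m i c)

variable [T2Space R]

theorem gordonSeries_zero_left {i c : ℕ} (hi : 0 < i) :
    gordonSeries R 0 i c = ramanujanTheta (-X ^ (i + 2 * c)) (-X ^ i) := by
  have hX {j : ℕ} (hj : j ≠ 0) : (X : R⟦X⟧) ∣ -X ^ j := (dvd_pow_self X hj).neg_right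
  have hs := summable_mul_thetaTerm (hX (j := i + 2 * c) (by omega)) (hX hi.ne') 1
  simp only [Pi.one_apply, one_mul] at hs
  rw [ramanujanTheta, ← hs.hasSum.nat_add_neg_add_one.tsum_eq, gordonSeries]
  refine tsum_congr fun n => ?_
  have h (l : ℤ) : (((i + 2 * c : ℕ) * triangular l + i * triangular (-l) : ℕ) : ℤ) =
      i * l ^ 2 + c * (l * (l + 1)) := by
    push_cast
    linear_combination i * triangular_add_triangular_neg l + c * two_mul_triangular l
  rw [thetaTerm_neg_X_pow (e := n * ((i + c) * n + c)) (by zify [h]; ring),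
    thetaTerm_neg_X_pow (e := n * ((i + c) * n + c) + (1 + 2 * n) * i) (by zify [h]; ring),
    show (-((n : ℤ) + 1)).natAbs = n + 1 by omega, Int.natAbs_natCast, gordonTerm, pochhammerRatio]
  simp only [Finset.range_zero, Finset.prod_empty]
  ring

variable [IsTopologicalRing R]

theorem gordonSeries_succ (m i c : ℕ) :
    gordonSeries R m (i + 1) c = gordonSeries R m i (c + 1) +
      X ^ ((m + 1) * i) * (gordonSeries R (m + 1) (c + 1) i +
        X ^ (m + 1) * gordonSeries R (m + 1) c (i + 1)) := by
  have ht := summable_gordonTerm (R := R)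
  have hp : Summable (gordonPrimitive R m (i + c + 1) c) :=
    summable_of_X_pow_dvd (Nat.cofinite_eq_atTop ▸ tendsto_id) (X_pow_dvd_gordonPrimitive m _ c)
  have hp' := (summable_nat_add_iff 1).2 hp
  have hX := (ht (m + 1) c (i + 1)).mul_left (X ^ (m + 1))
  have hsum := ((ht (m + 1) (c + 1) i).add hX).mul_left (X ^ ((m + 1) * i))
  have htel : ∑' n, (gordonPrimitive R m (i + c + 1) c n -
      gordonPrimitive R m (i + c + 1) c (n + 1)) = 0 := by
    rw [hp.tsum_sub hp', hp.tsum_eq_zero_add, add_sub_cancel_right]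
    simp [gordonPrimitive]
  simp only [gordonSeries]
  rw [tsum_congr (gordonTerm_succ m i c), ((ht m i (c + 1)).add hsum).tsum_add (hp.sub hp'), htel,
    (ht m i (c + 1)).tsum_add hsum, ((ht _ _ _).add hX).tsum_mul_left, (ht _ _ _).tsum_add hX,
    (ht _ _ _).tsum_mul_left, add_zero]

theorem X_pow_dvd_gordonSeries_sub_pochhammerRatio (m : ℕ) {i : ℕ} (c : ℕ) (hi : 0 < i) :
    X ^ (m + 1) ∣ gordonSeries R m i c - pochhammerRatio R m 0 := by
  have hs : Summable fun n => gordonTerm R m i c (n + 1) :=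
    (summable_nat_add_iff 1).2 (summable_gordonTerm m i c)
  have h0 : gordonTerm R m i c 0 = pochhammerRatio R m 0 -
      X ^ ((m + 1) * i) * pochhammerRatio R m 0 := by
    rw [gordonTerm]; ring
  have htail := X_pow_dvd_tsum hs fun n => X_pow_dvd_gordonTerm_succ m c n hi
  have hhead : (X : R⟦X⟧) ^ (m + 1) ∣ X ^ ((m + 1) * i) * pochhammerRatio R m 0 :=
    (pow_dvd_pow X (Nat.le_mul_of_pos_right _ hi)).mul_right _
  rw [gordonSeries, (summable_gordonTerm (R := R) m i c).tsum_eq_zero_add, h0, sub_add_comm,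
    add_sub_cancel_right]
  exact htail.sub hhead

theorem X_pow_dvd_qProd_mul_gordonSeries_sub (m : ℕ) {i : ℕ} (c : ℕ) (hi : 0 < i) :
    X ^ (m + 1) ∣ qProd X X * gordonSeries R m i c - qProd (-X) X := by
  have ha : X ^ (m + 1) ∣ qProd ((X : R⟦X⟧) * X ^ m) X - 1 :=
    X_pow_dvd_qProd_sub_one dvd_rfl (pow_succ' X m).dvd
  have hb : X ^ (m + 1) ∣ qProd (-(X : R⟦X⟧) * X ^ m) X - 1 :=
    X_pow_dvd_qProd_sub_one dvd_rfl (by rw [neg_mul, ← pow_succ', dvd_neg])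
  have hJ := X_pow_dvd_gordonSeries_sub_pochhammerRatio (R := R) m c hi
  have hratio := pochhammerRatio_mul_prod (R := R) m 0
  simp only [zero_add, pow_succ', sub_eq_add_neg, ← neg_mul] at hratio
  convert (hJ.mul_left (qProd X X)).add ((ha.sub hb).mul_left
    (∏ j ∈ Finset.range m, (1 + -(X : R⟦X⟧) * X ^ j))) using 1
  rw [← prod_range_mul_qProd m (X : R⟦X⟧) dvd_rfl, ← prod_range_mul_qProd m (-X : R⟦X⟧) dvd_rfl]
  linear_combination qProd ((X : R⟦X⟧) * X ^ m) X * hratio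

end GordonSeries

section PartProd

variable {R : Type*} [CommRing R] [TopologicalSpace R]

/-- The product `∏_{i ∈ A} (1 + z X ^ i)`: for `z = 1` the generating function of partitions into
distinct parts in `A`, for `z = -1` the inverse of that of partitions into parts in `A`. -/
noncomputable def partProd (z : R⟦X⟧) (A : Set ℕ) : R⟦X⟧ := ∏' i : A, (1 + z * X ^ (i : ℕ))

variable (z : R⟦X⟧)

theorem multipliable_partProd (A : Set ℕ) : Multipliable fun i : A => 1 + z * X ^ (i : ℕ) :=
  multipliable_one_add_of_X_pow_dvd
    (Nat.cofinite_eq_atTop ▸ Subtype.val_injective.tendsto_cofinite) fun _ => dvd_mul_left _ _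

theorem partProd_eq_qProd {A : Set ℕ} {j d : ℕ} (hd : 0 < d)
    (hA : A = Set.range fun n => j + d * n) : partProd z A = qProd (z * X ^ j) (X ^ d) := by
  have hinj : Function.Injective fun n => j + d * n := fun m n h => by simpa [hd.ne'] using h
  rw [hA, partProd, qProd, tprod_range (fun i => 1 + z * X ^ i) hinj]
  simp only [pow_add, pow_mul, mul_assoc]

theorem partProd_setOf_pos : partProd z {i | 0 < i} = qProd (z * X) X := by
  have h : {i | 0 < i} = Set.range fun n => 1 + 1 * n :=
    Set.ext fun i => ⟨fun hi => ⟨i - 1, by grind⟩, by grind⟩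
  simpa using partProd_eq_qProd z one_pos h

theorem partProd_setOf_mod_eq {j d : ℕ} (hj : 0 < j) (hjd : j < d) :
    partProd z {i | i % d = j} = qProd (z * X ^ j) (X ^ d) := by
  refine partProd_eq_qProd z (hj.trans hjd) (Set.ext fun i => ⟨?_, ?_⟩)
  · rintro rfl
    exact ⟨i / d, Nat.mod_add_div i d⟩
  · rintro ⟨n, rfl⟩
    simp [Nat.mod_eq_of_lt hjd]

theorem partProd_setOf_pos_and_dvd {d : ℕ} (hd : 0 < d) :
    partProd z {i | 0 < i ∧ d ∣ i} = qProd (z * X ^ d) (X ^ d) := by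
  refine partProd_eq_qProd z hd (Set.ext fun i => ⟨?_, ?_⟩)
  · rintro ⟨hi, n, rfl⟩
    obtain ⟨n, rfl⟩ := Nat.exists_eq_add_of_lt (Nat.pos_of_mul_pos_left hi)
    exact ⟨n, by ring⟩
  · rintro ⟨n, rfl⟩
    exact ⟨by simp [hd], ⟨1 + n, by ring⟩⟩

variable [T2Space R]

theorem X_pow_dvd_partProd_sub_one {A : Set ℕ} {n : ℕ} (hA : ∀ i ∈ A, n ≤ i) :
    X ^ n ∣ partProd z A - 1 :=
  X_pow_dvd_tprod_one_add_sub_one (multipliable_partProd z A) fun i =>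
    (pow_dvd_pow X (hA i i.2)).mul_left z

variable [IsTopologicalRing R]

theorem partProd_union {A B : Set ℕ} (h : Disjoint A B) :
    partProd z (A ∪ B) = partProd z A * partProd z B :=
  Multipliable.tprod_union_disjoint (f := fun i => 1 + z * X ^ i) h (multipliable_partProd z A)
    (multipliable_partProd z B)

theorem one_add_mul_partProd_sdiff_singleton {A : Set ℕ} {j : ℕ} (hj : j ∈ A) :
    (1 + z * X ^ j) * partProd z (A \ {j}) = partProd z A := by
  conv_rhs => rw [← Set.union_sdiff_cancel (Set.singleton_subset_iff.2 hj),
    partProd_union z Set.disjoint_sdiff_right, partProd, tprod_singleton j fun i => 1 + z * X ^ i]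

theorem partProd_setOf_not_dvd_mul_qProd {k : ℕ} (hk : 0 < k) :
    partProd z {i | ¬ k ∣ i} * qProd (z * X ^ k) (X ^ k) = qProd (z * X) X := by
  have hunion : {i | ¬ k ∣ i} ∪ {i | 0 < i ∧ k ∣ i} = {i | 0 < i} := by
    ext i
    have hpos : ¬ k ∣ i → 0 < i := fun h => Nat.pos_of_ne_zero fun h0 => h (h0 ▸ dvd_zero k)
    simp only [Set.mem_union, Set.mem_ofPred_eq]
    tauto
  have hdisj : Disjoint {i | ¬ k ∣ i} {i | 0 < i ∧ k ∣ i} :=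
    Set.disjoint_left.2 fun i hi hi' => hi hi'.2
  rw [← partProd_setOf_pos_and_dvd z hk, ← partProd_union z hdisj, hunion, partProd_setOf_pos]

theorem partProd_setOf_mod_ne_mul_qProd {a d : ℕ} (ha : 0 < a) (had : 2 * a < d) :
    partProd z {i | i % d ≠ 0 ∧ i % d ≠ a ∧ i % d ≠ d - a} *
        (qProd (z * X ^ (d - a)) (X ^ d) * qProd (z * X ^ a) (X ^ d) *
          qProd (z * X ^ d) (X ^ d)) =
      qProd (z * X) X := by
  have hunion : {i | i % d ≠ 0 ∧ i % d ≠ a ∧ i % d ≠ d - a} ∪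
      ({i | i % d = d - a} ∪ {i | i % d = a} ∪ {i | 0 < i ∧ d ∣ i}) = {i | 0 < i} := by
    ext i
    simp only [Set.mem_union, Set.mem_ofPred_eq, Nat.dvd_iff_mod_eq_zero]
    rcases i.eq_zero_or_pos with rfl | hi
    · simp only [Nat.zero_mod]; omega
    · omega
  rw [← partProd_setOf_mod_eq z ha (by omega : a < d),
    ← partProd_setOf_mod_eq z (by omega : 0 < d - a) (by omega : d - a < d),
    ← partProd_setOf_pos_and_dvd z (by omega : 0 < d), ← partProd_union, ← partProd_union,
    ← partProd_union, hunion, partProd_setOf_pos]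
  all_goals
    refine Set.disjoint_left.2 fun i => ?_
    simp only [Set.mem_union, Set.mem_ofPred_eq, Nat.dvd_iff_mod_eq_zero]
    omega

end PartProd

section WeightGenFun

variable {α β : Type*}

/-- The generating function `∑_{x ∈ S} X ^ w x` of a set `S` graded by a weight `w`. The count of
a weight that is attained infinitely often in `S` is `0`. -/
noncomputable def weightGenFun (w : α → ℕ) (S : Set α) : ℤ⟦X⟧ :=
  PowerSeries.mk fun n => (Set.ncard {x | x ∈ S ∧ w x = n} : ℤ)

variable {w : α → ℕ} {S T : Set α}

theorem coeff_weightGenFun (n : ℕ) :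
    coeff n (weightGenFun w S) = (Set.ncard {x | x ∈ S ∧ w x = n} : ℤ) :=
  coeff_mk n _

theorem weightGenFun_empty : weightGenFun w ∅ = 0 := by
  ext n
  simp [coeff_weightGenFun]

theorem weightGenFun_union (hfin : ∀ n, {x | x ∈ S ∪ T ∧ w x = n}.Finite) (h : Disjoint S T) :
    weightGenFun w (S ∪ T) = weightGenFun w S + weightGenFun w T := by
  ext n
  have hunion : {x | x ∈ S ∪ T ∧ w x = n} = {x | x ∈ S ∧ w x = n} ∪ {x | x ∈ T ∧ w x = n} :=
    Set.ext fun x => by simp [or_and_right]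
  have hfin_n := hfin n
  rw [hunion, Set.finite_union] at hfin_n
  have hdisj : Disjoint {x | x ∈ S ∧ w x = n} {x | x ∈ T ∧ w x = n} :=
    h.mono (fun _ hx => hx.1) fun _ hx => hx.1
  rw [map_add, coeff_weightGenFun, coeff_weightGenFun, coeff_weightGenFun, ← Nat.cast_add, hunion,
    Set.ncard_union_eq hdisj hfin_n.1 hfin_n.2]

theorem weightGenFun_image {v : β → ℕ} {f : α → β} {d : ℕ} (hf : Function.Injective f)
    (hw : ∀ x, v (f x) = w x + d) : weightGenFun v (f '' S) = X ^ d * weightGenFun w S := by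
  ext n
  have himage : {y | y ∈ f '' S ∧ v y = n} = f '' {x | x ∈ S ∧ w x + d = n} := by
    ext y
    simp only [Set.mem_image, Set.mem_ofPred_eq, ← hw]
    grind
  rw [coeff_weightGenFun, himage, Set.ncard_image_of_injective _ hf, coeff_X_pow_mul']
  split_ifs with h
  · simp only [coeff_weightGenFun, eq_tsub_iff_add_eq_of_le h]
  · have hempty : {x | x ∈ S ∧ w x + d = n} = ∅ :=
      Set.eq_empty_of_forall_notMem fun x hx => h (hx.2 ▸ Nat.le_add_left d (w x))
    simp [hempty]

theorem X_pow_dvd_weightGenFun_sub_one {x₀ : α} {N : ℕ} (hx₀ : x₀ ∈ S) (hw₀ : w x₀ = 0)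
    (h : ∀ x ∈ S, x ≠ x₀ → N ≤ w x) : X ^ N ∣ weightGenFun w S - 1 := by
  refine X_pow_dvd_iff.2 fun n hn => ?_
  have hlevel : {x | x ∈ S ∧ w x = n} = if n = 0 then {x₀} else ∅ := by
    ext x
    have := h x
    split_ifs <;> grind
  rw [map_sub, coeff_weightGenFun, hlevel, coeff_one]
  split_ifs <;> simp

theorem ncard_eq_of_weightGenFun_eq (h : weightGenFun w S = weightGenFun w T) (n : ℕ) :
    Set.ncard {x | x ∈ S ∧ w x = n} = Set.ncard {x | x ∈ T ∧ w x = n} := by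
  have hn := congrArg (coeff n) h
  rw [coeff_weightGenFun, coeff_weightGenFun] at hn
  exact_mod_cast hn

end WeightGenFun

section Overpartitions

variable {S T : Set ((ℕ →₀ ℕ) × (ℕ →₀ ℕ))}

theorem opWt_zero : opWt 0 = 0 := by
  simp [opWt]

theorem opWt_add (p p' : (ℕ →₀ ℕ) × (ℕ →₀ ℕ)) : opWt (p + p') = opWt p + opWt p' := by
  have h (f g : ℕ →₀ ℕ) : ((f + g).sum fun i v => i * v) =
      (f.sum fun i v => i * v) + g.sum fun i v => i * v :=
    Finsupp.sum_add_index' (by simp) mul_add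
  simp only [opWt, Prod.fst_add, Prod.snd_add, h]
  ring

theorem mul_le_opWt (p : (ℕ →₀ ℕ) × (ℕ →₀ ℕ)) (i : ℕ) : i * (p.1 i + p.2 i) ≤ opWt p := by
  have h (f : ℕ →₀ ℕ) : i * f i ≤ f.sum fun i v => i * v := by
    by_cases hi : i ∈ f.support
    · exact Finset.single_le_sum (f := fun i => i * f i) (fun _ _ => Nat.zero_le _) hi
    · simp [Finsupp.notMem_support_iff.1 hi]
  rw [mul_add]
  exact add_le_add (h p.1) (h p.2)

theorem finite_setOf_isOverPtn_opWt (n : ℕ) : {p | IsOverPtn p ∧ opWt p = n}.Finite := by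
  let b : ℕ →₀ ℕ := Finsupp.indicator (Finset.range (n + 1)) fun _ _ => n
  refine (Set.finite_Iic (b, b)).subset ?_
  rintro p ⟨⟨h1, h2, -⟩, rfl⟩
  have hb (i : ℕ) : p.1 i + p.2 i ≤ b i := by
    have hi := mul_le_opWt p i
    rcases i.eq_zero_or_pos with rfl | hpos
    · omega
    rcases (p.1 i + p.2 i).eq_zero_or_pos with h | h
    · omega
    have hmem : i ∈ Finset.range (opWt p + 1) :=
      Finset.mem_range_succ_iff.2 ((Nat.le_mul_of_pos_right i h).trans hi)
    rw [Finsupp.indicator_of_mem hmem]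
    exact (Nat.le_mul_of_pos_left _ hpos).trans hi
  exact ⟨fun i => (Nat.le_add_right _ _).trans (hb i),
    fun i => (Nat.le_add_left _ _).trans (hb i)⟩

theorem weightGenFun_opWt_union (hST : ∀ p ∈ S ∪ T, IsOverPtn p) (h : Disjoint S T) :
    weightGenFun opWt (S ∪ T) = weightGenFun opWt S + weightGenFun opWt T :=
  weightGenFun_union
    (fun n => (finite_setOf_isOverPtn_opWt n).subset fun p hp => ⟨hST p hp.1, hp.2⟩) h

theorem X_pow_dvd_weightGenFun_opWt_sub_one {N : ℕ} (h0 : 0 ∈ S)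
    (hS : ∀ p ∈ S, ∀ i < N, p.1 i = 0 ∧ p.2 i = 0) : X ^ N ∣ weightGenFun opWt S - 1 := by
  refine X_pow_dvd_weightGenFun_sub_one h0 opWt_zero fun p hp hp0 => ?_
  obtain ⟨i, hi⟩ : ∃ i, 0 < p.1 i + p.2 i := by
    contrapose! hp0
    simpa [Prod.ext_iff, Finsupp.ext_iff, forall_and] using hp0
  have hN : N ≤ i := by
    by_contra! hlt
    have := hS p hp i hlt
    omega
  exact hN.trans ((Nat.le_mul_of_pos_right i hi).trans (mul_le_opWt p i))

/-- The overpartitions obtained from those in `S` by adding `u` non-overlined and `v` overlined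
parts `j`. -/
def addParts (j u v : ℕ) (S : Set ((ℕ →₀ ℕ) × (ℕ →₀ ℕ))) : Set ((ℕ →₀ ℕ) × (ℕ →₀ ℕ)) :=
  (· + (Finsupp.single j u, Finsupp.single j v)) '' S

theorem mem_addParts {j u v : ℕ} {p : (ℕ →₀ ℕ) × (ℕ →₀ ℕ)} :
    p ∈ addParts j u v S ↔ u ≤ p.1 j ∧ v ≤ p.2 j ∧
      (p.1 - Finsupp.single j u, p.2 - Finsupp.single j v) ∈ S := by
  constructor
  · rintro ⟨p, hp, rfl⟩
    simpa using hp
  · rintro ⟨hu, hv, hp⟩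
    exact ⟨_, hp, Prod.ext (tsub_add_cancel_of_le (Finsupp.single_le_iff.2 hu))
      (tsub_add_cancel_of_le (Finsupp.single_le_iff.2 hv))⟩

theorem weightGenFun_addParts (j u v : ℕ) (S : Set ((ℕ →₀ ℕ) × (ℕ →₀ ℕ))) :
    weightGenFun opWt (addParts j u v S) = X ^ (j * (u + v)) * weightGenFun opWt S := by
  refine weightGenFun_image (add_left_injective _) fun p => ?_
  rw [opWt_add]
  simp [opWt, mul_add]

/-- The overpartitions with all parts greater than `m`, fewer than `a` non-overlined parts `m + 1`,
and `f_i + f_{ī} + f_{i+1} < k` for all `i > m`. -/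
def gordonSet (k m a : ℕ) : Set ((ℕ →₀ ℕ) × (ℕ →₀ ℕ)) :=
  {p | IsOverPtn p ∧ (∀ i ≤ m, p.1 i = 0 ∧ p.2 i = 0) ∧ p.1 (m + 1) < a ∧
    ∀ i, m < i → p.1 i + p.2 i + p.1 (i + 1) < k}

theorem mem_gordonSet_zero_iff {k a : ℕ} {p : (ℕ →₀ ℕ) × (ℕ →₀ ℕ)} :
    p ∈ gordonSet k 0 a ↔
      IsOverPtn p ∧ p.1 1 < a ∧ ∀ i, 1 ≤ i → p.1 i + p.2 i + p.1 (i + 1) < k := by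
  simp only [gordonSet, IsOverPtn, Set.mem_ofPred_eq, Nat.le_zero, forall_eq, zero_add,
    Nat.succ_le_iff]
  tauto

theorem gordonSet_zero (k m : ℕ) : gordonSet k m 0 = ∅ := by
  simp [gordonSet]

theorem mem_addParts_gordonSet_iff {i c d m v : ℕ} (hv : v ≤ 1) (hd : d + v = c + 1)
    {p : (ℕ →₀ ℕ) × (ℕ →₀ ℕ)} :
    p ∈ addParts (m + 1) i v (gordonSet (i + c + 1) (m + 1) d) ↔
      p ∈ gordonSet (i + c + 1) m (i + 1) ∧ p.1 (m + 1) = i ∧ p.2 (m + 1) = v := by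
  rw [mem_addParts]
  simp only [gordonSet, IsOverPtn, Set.mem_ofPred_eq, Finsupp.coe_tsub, Pi.sub_apply,
    Finsupp.single_apply]
  constructor
  · rintro ⟨hi, hv', ⟨hnon, hover, hle⟩, hzero, hlt, hfreq⟩
    have hi' : p.1 (m + 1) = i := by grind
    have hv'' : p.2 (m + 1) = v := by grind
    refine ⟨⟨⟨by grind, by grind, by grind⟩, by grind, by grind, fun j hj => ?_⟩, hi', hv''⟩
    obtain rfl | hj' := eq_or_ne j (m + 1)
    · grind
    · have := hfreq j
      grind
  · rintro ⟨⟨⟨hnon, hover, hle⟩, hzero, -, hfreq⟩, hi, hv'⟩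
    have hfirst := hfreq (m + 1)
    refine ⟨by omega, by omega, ⟨by grind, by grind, by grind⟩, ?_, ?_, ?_⟩ <;> grind

theorem gordonSet_succ_eq_union (i c m : ℕ) :
    gordonSet (i + c + 1) m (i + 1) = gordonSet (i + c + 1) m i ∪
      (addParts (m + 1) i 0 (gordonSet (i + c + 1) (m + 1) (c + 1)) ∪
        addParts (m + 1) i 1 (gordonSet (i + c + 1) (m + 1) c)) := by
  ext p
  rw [Set.mem_union, Set.mem_union, mem_addParts_gordonSet_iff zero_le_one (add_zero (c + 1)),
    mem_addParts_gordonSet_iff le_rfl rfl]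
  constructor
  · intro hp
    have hover := hp.1.2.2 (m + 1)
    have hnon := hp.2.2.1
    rcases (Nat.le_of_lt_succ hnon).lt_or_eq with hlt | heq
    · exact .inl ⟨hp.1, hp.2.1, hlt, hp.2.2.2⟩
    · exact .inr ((Nat.le_one_iff_eq_zero_or_eq_one.1 hover).imp (⟨hp, heq, ·⟩) (⟨hp, heq, ·⟩))
  · rintro (⟨hp, hzero, hlt, hfreq⟩ | h | h)
    · exact ⟨hp, hzero, hlt.trans i.lt_succ_self, hfreq⟩
    · exact h.1
    · exact h.1

theorem weightGenFun_gordonSet_succ (i c m : ℕ) :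
    weightGenFun opWt (gordonSet (i + c + 1) m (i + 1)) =
      weightGenFun opWt (gordonSet (i + c + 1) m i) +
        X ^ ((m + 1) * i) * (weightGenFun opWt (gordonSet (i + c + 1) (m + 1) (c + 1)) +
          X ^ (m + 1) * weightGenFun opWt (gordonSet (i + c + 1) (m + 1) c)) := by
  have hU : ∀ p ∈ gordonSet (i + c + 1) m (i + 1), IsOverPtn p := fun p hp => hp.1
  have hnon : Disjoint (gordonSet (i + c + 1) m i)
      (addParts (m + 1) i 0 (gordonSet (i + c + 1) (m + 1) (c + 1)) ∪
        addParts (m + 1) i 1 (gordonSet (i + c + 1) (m + 1) c)) := by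
    refine Set.disjoint_left.2 fun p hp hp' => hp.2.2.1.not_ge ?_
    exact hp'.elim (fun h => (mem_addParts.1 h).1) fun h => (mem_addParts.1 h).1
  have hover : Disjoint (addParts (m + 1) i 0 (gordonSet (i + c + 1) (m + 1) (c + 1)))
      (addParts (m + 1) i 1 (gordonSet (i + c + 1) (m + 1) c)) := by
    refine Set.disjoint_left.2 fun p hp hp' => ?_
    have h0 := ((mem_addParts_gordonSet_iff zero_le_one (add_zero (c + 1))).1 hp).2.2
    have h1 := ((mem_addParts_gordonSet_iff le_rfl rfl).1 hp').2.2
    exact zero_ne_one (h0.symm.trans h1)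
  rw [gordonSet_succ_eq_union] at hU ⊢
  rw [weightGenFun_opWt_union hU hnon,
    weightGenFun_opWt_union (fun p hp => hU p (.inr hp)) hover, weightGenFun_addParts,
    weightGenFun_addParts]
  ring

theorem X_pow_dvd_weightGenFun_gordonSet_sub_one {k m a : ℕ} (hk : 0 < k) (ha : 0 < a) :
    X ^ (m + 1) ∣ weightGenFun opWt (gordonSet k m a) - 1 :=
  X_pow_dvd_weightGenFun_opWt_sub_one (by simp [gordonSet, IsOverPtn, hk, ha])
    fun _ hp i hi => hp.2.1 i (Nat.le_of_lt_succ hi)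

/-- The overpartitions with non-overlined parts in `A` and overlined parts in `B`. -/
def restrictedSet (A B : Set ℕ) : Set ((ℕ →₀ ℕ) × (ℕ →₀ ℕ)) :=
  {p | IsOverPtn p ∧ (∀ i, 0 < p.1 i → i ∈ A) ∧ ∀ i, 0 < p.2 i → i ∈ B}

variable {A B : Set ℕ} {j : ℕ}

theorem mem_restrictedSet_setOf_pos_iff {p : (ℕ →₀ ℕ) × (ℕ →₀ ℕ)} :
    p ∈ restrictedSet A {i | 0 < i} ↔ IsOverPtn p ∧ ∀ i, 0 < p.1 i → i ∈ A := by
  refine ⟨fun h => ⟨h.1, h.2.1⟩, fun h => ⟨h.1, h.2, fun i hi => Nat.pos_of_ne_zero ?_⟩⟩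
  rintro rfl
  exact hi.ne' h.1.2.1

theorem mem_restrictedSet_self_iff {p : (ℕ →₀ ℕ) × (ℕ →₀ ℕ)} :
    p ∈ restrictedSet A A ↔ IsOverPtn p ∧ ∀ i, 0 < p.1 i + p.2 i → i ∈ A := by
  simp only [restrictedSet, Set.mem_ofPred_eq, Nat.add_pos_iff_pos_or_pos, or_imp, forall_and]

theorem restrictedSet_eq_union_left (hj : 0 < j) (hA : j ∈ A) :
    restrictedSet A B = restrictedSet (A \ {j}) B ∪ addParts j 1 0 (restrictedSet A B) := by
  ext p
  simp only [Set.mem_union, mem_addParts]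
  simp only [restrictedSet, IsOverPtn, Set.mem_ofPred_eq, Finsupp.coe_tsub, Pi.sub_apply,
    Finsupp.single_apply, Set.mem_sdiff, Set.mem_singleton_iff]
  by_cases hp : p.1 j = 0 <;> grind

theorem restrictedSet_eq_union_right (hj : 0 < j) (hB : j ∈ B) :
    restrictedSet A B =
      restrictedSet A (B \ {j}) ∪ addParts j 0 1 (restrictedSet A (B \ {j})) := by
  ext p
  simp only [Set.mem_union, mem_addParts]
  simp only [restrictedSet, IsOverPtn, Set.mem_ofPred_eq, Finsupp.coe_tsub, Pi.sub_apply,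
    Finsupp.single_apply, Set.mem_sdiff, Set.mem_singleton_iff]
  by_cases hp : p.2 j = 0 <;> grind

theorem weightGenFun_restrictedSet_sdiff_singleton_left (B : Set ℕ) (hj : 0 < j) (hA : j ∈ A) :
    weightGenFun opWt (restrictedSet (A \ {j}) B) =
      (1 - X ^ j) * weightGenFun opWt (restrictedSet A B) := by
  have hU : ∀ p ∈ restrictedSet A B, IsOverPtn p := fun p hp => hp.1
  have hdisj : Disjoint (restrictedSet (A \ {j}) B) (addParts j 1 0 (restrictedSet A B)) :=
    Set.disjoint_left.2 fun p hp hp' => (hp.2.1 j (mem_addParts.1 hp').1).2 rfl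
  have h := congrArg (weightGenFun opWt) (restrictedSet_eq_union_left (B := B) hj hA)
  rw [restrictedSet_eq_union_left hj hA] at hU
  rw [weightGenFun_opWt_union hU hdisj, weightGenFun_addParts, add_zero, mul_one] at h
  linear_combination -h

theorem weightGenFun_restrictedSet_of_mem_right (A : Set ℕ) (hj : 0 < j) (hB : j ∈ B) :
    weightGenFun opWt (restrictedSet A B) =
      (1 + X ^ j) * weightGenFun opWt (restrictedSet A (B \ {j})) := by
  have hU : ∀ p ∈ restrictedSet A B, IsOverPtn p := fun p hp => hp.1
  have hdisj : Disjoint (restrictedSet A (B \ {j})) (addParts j 0 1 (restrictedSet A (B \ {j}))) :=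
    Set.disjoint_left.2 fun p hp hp' => (hp.2.2 j (mem_addParts.1 hp').2.1).2 rfl
  rw [restrictedSet_eq_union_right hj hB] at hU ⊢
  rw [weightGenFun_opWt_union hU hdisj, weightGenFun_addParts, zero_add, mul_one]
  ring

end Overpartitions

section ProductFormulas

variable {A B : Set ℕ}

theorem weightGenFun_restrictedSet_sdiff_singleton_left_mul_partProd (A B : Set ℕ) {j : ℕ}
    (hj : 0 < j) :
    weightGenFun opWt (restrictedSet (A \ {j}) B) * partProd (-1) (A \ {j}) =
      weightGenFun opWt (restrictedSet A B) * partProd (-1) A := by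
  by_cases hA : j ∈ A
  · rw [weightGenFun_restrictedSet_sdiff_singleton_left B hj hA,
      ← one_add_mul_partProd_sdiff_singleton (-1) hA]
    ring
  · rw [Set.sdiff_singleton_eq_self hA]

theorem weightGenFun_restrictedSet_sdiff_singleton_right_mul_sub_dvd (A B : Set ℕ) {j : ℕ}
    (hj : 0 < j) (f : ℤ⟦X⟧) :
    weightGenFun opWt (restrictedSet A (B \ {j})) * f - partProd 1 (B \ {j}) ∣
      weightGenFun opWt (restrictedSet A B) * f - partProd 1 B := by
  by_cases hB : j ∈ B
  · rw [weightGenFun_restrictedSet_of_mem_right A hj hB,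
      ← one_add_mul_partProd_sdiff_singleton 1 hB]
    exact ⟨1 + X ^ j, by ring⟩
  · rw [Set.sdiff_singleton_eq_self hB]

theorem X_pow_dvd_weightGenFun_restrictedSet_sub_one {m : ℕ} (hA : ∀ i ∈ A, m ≤ i)
    (hB : ∀ i ∈ B, m ≤ i) : X ^ m ∣ weightGenFun opWt (restrictedSet A B) - 1 := by
  refine X_pow_dvd_weightGenFun_opWt_sub_one (by simp [restrictedSet, IsOverPtn])
    fun p hp i hi => ⟨?_, ?_⟩
  · exact Nat.eq_zero_of_not_pos fun h => hi.not_ge (hA i (hp.2.1 i h))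
  · exact Nat.eq_zero_of_not_pos fun h => hi.not_ge (hB i (hp.2.2 i h))

theorem X_pow_dvd_weightGenFun_restrictedSet_mul_partProd_sub {m : ℕ} (n : ℕ)
    (hA : ∀ i ∈ A, m < i) (hB : ∀ i ∈ B, m < i) :
    X ^ (m + n) ∣ weightGenFun opWt (restrictedSet A B) * partProd (-1) A - partProd 1 B := by
  -- Modulo `X ^ (m + n)` only the parts `m + 1, …, m + n` matter, and they are removed one by one.
  induction n generalizing m A B with
  | zero =>
    have hA' : ∀ i ∈ A, m ≤ i := fun i hi => (hA i hi).le
    have hB' : ∀ i ∈ B, m ≤ i := fun i hi => (hB i hi).le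
    obtain ⟨f, hf⟩ := X_pow_dvd_weightGenFun_restrictedSet_sub_one hA' hB'
    obtain ⟨g, hg⟩ := X_pow_dvd_partProd_sub_one (R := ℤ) (-1) hA'
    obtain ⟨h, hh⟩ := X_pow_dvd_partProd_sub_one (R := ℤ) 1 hB'
    exact ⟨f * partProd (-1) A + g - h, by linear_combination partProd (-1) A * hf + hg - hh⟩
  | succ n ih =>
    have hlt {C : Set ℕ} (hC : ∀ i ∈ C, m < i) : ∀ i ∈ C \ {m + 1}, m + 1 < i := fun i hi =>
      lt_of_le_of_ne (hC i hi.1) (Ne.symm hi.2)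
    rw [← weightGenFun_restrictedSet_sdiff_singleton_left_mul_partProd A B m.succ_pos,
      ← Nat.succ_add_eq_add_succ]
    exact (ih (hlt hA) (hlt hB)).trans
      (weightGenFun_restrictedSet_sdiff_singleton_right_mul_sub_dvd _ B m.succ_pos _)

theorem weightGenFun_restrictedSet_mul_partProd (hA : 0 ∉ A) (hB : 0 ∉ B) :
    weightGenFun opWt (restrictedSet A B) * partProd (-1) A = partProd 1 B := by
  have hpos {C : Set ℕ} (hC : 0 ∉ C) : ∀ i ∈ C, 0 < i := fun i hi =>
    Nat.pos_of_ne_zero (ne_of_mem_of_not_mem hi hC)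
  refine eq_of_forall_X_pow_dvd_sub fun n => ?_
  simpa using X_pow_dvd_weightGenFun_restrictedSet_mul_partProd_sub n (hpos hA) (hpos hB)

theorem eq_zero_of_gordon_recurrence {R : Type*} [CommRing R] {D : ℕ → ℕ → ℕ → R⟦X⟧}
    (hzero : ∀ m c, D m 0 c = 0)
    (hsucc : ∀ m i c, D m (i + 1) c = D m i (c + 1) +
      X ^ ((m + 1) * i) * (D (m + 1) (c + 1) i + X ^ (m + 1) * D (m + 1) c (i + 1)))
    (hdvd : ∀ m i c, X ^ m ∣ D m i c) (m i c : ℕ) : D m i c = 0 := by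
  have h (n m i c : ℕ) : X ^ (m + n) ∣ D m i c := by
    induction n generalizing m i c with
    | zero => exact hdvd m i c
    | succ n ihn =>
      induction i generalizing c with
      | zero => simp [hzero]
      | succ i ihi =>
        rw [hsucc]
        have ih (i c : ℕ) : X ^ (m + (n + 1)) ∣ D (m + 1) i c := by
          simpa [add_assoc, add_comm 1] using ihn (m + 1) i c
        exact dvd_add (ihi (c + 1)) (((ih _ _).add ((ih _ _).mul_left _)).mul_left _)
  exact eq_of_forall_X_pow_dvd_sub fun n => by
    simpa using (pow_dvd_pow X (Nat.le_add_left n m)).trans (h n m i c)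

theorem qProd_mul_weightGenFun_gordonSet (m i c : ℕ) :
    qProd (-X) X * weightGenFun opWt (gordonSet (i + c) m i) =
      qProd X X * gordonSeries ℤ m i c := by
  have h := eq_zero_of_gordon_recurrence
    (D := fun m i c => qProd X X * gordonSeries ℤ m i c -
      qProd (-X) X * weightGenFun opWt (gordonSet (i + c) m i))
    (fun m c => by simp [gordonSeries_zero, gordonSet_zero, weightGenFun_empty])
    (fun m i c => ?_) (fun m i c => ?_) m i c
  · exact (sub_eq_zero.1 h).symm
  · have hG := weightGenFun_gordonSet_succ i c m
    rw [gordonSeries_succ, add_right_comm i 1 c, add_comm (c + 1) i, add_comm c (i + 1),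
      add_right_comm i 1 c, ← add_assoc, hG]
    ring
  · rcases i.eq_zero_or_pos with rfl | hi
    · simp [gordonSeries_zero, gordonSet_zero, weightGenFun_empty]
    have hJ := X_pow_dvd_qProd_mul_gordonSeries_sub (R := ℤ) m c hi
    have hG := X_pow_dvd_weightGenFun_gordonSet_sub_one (m := m) (Nat.add_pos_left hi c) hi
    have hsub := (pow_dvd_pow X m.le_succ).trans (dvd_sub hJ (hG.mul_left (qProd (-X) X)))
    convert hsub using 1
    ring

theorem qProd_mul_weightGenFun_gordonSet_zero {a : ℕ} (c : ℕ) (ha : 0 < a) :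
    qProd (-X) X * weightGenFun opWt (gordonSet (a + c) 0 a) =
      qProd X X * ramanujanTheta (-X ^ (a + 2 * c)) (-X ^ a) := by
  rw [qProd_mul_weightGenFun_gordonSet, gordonSeries_zero_left ha]

theorem weightGenFun_gordonSet_of_lt {k a : ℕ} (ha : 0 < a) (hak : a < k) :
    weightGenFun opWt (gordonSet k 0 a) =
      weightGenFun opWt (restrictedSet
        {i | i % (2 * k) ≠ 0 ∧ i % (2 * k) ≠ a ∧ i % (2 * k) ≠ 2 * k - a} {i | 0 < i}) := by
  set A := {i | i % (2 * k) ≠ 0 ∧ i % (2 * k) ≠ a ∧ i % (2 * k) ≠ 2 * k - a} with hA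
  have hP := partProd_setOf_mod_ne_mul_qProd (R := ℤ) (-1) ha (mul_lt_mul_of_pos_left hak two_pos)
  have hR := weightGenFun_restrictedSet_mul_partProd (A := A) (B := {i | 0 < i}) (by simp [hA])
    (by simp)
  rw [partProd_setOf_pos, one_mul] at hR
  obtain ⟨c, rfl⟩ := Nat.exists_eq_add_of_le hak.le
  have hX {j : ℕ} (hj : j ≠ 0) : (X : ℤ⟦X⟧) ∣ -X ^ j := (dvd_pow_self X hj).neg_right
  have hJ := qProd_mul_qProd_mul_qProd_eq_ramanujanTheta (hX (j := a + 2 * c) (by omega))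
    (hX ha.ne')
  have huv : (-X ^ (a + 2 * c) : ℤ⟦X⟧) * -X ^ a = X ^ (2 * (a + c)) := by ring
  have hexp : 2 * (a + c) - a = a + 2 * c := by omega
  rw [huv] at hJ
  rw [hexp, neg_one_mul, neg_one_mul, neg_one_mul, neg_one_mul, hJ, ← hexp, ← hA] at hP
  refine (isUnit_qProd dvd_rfl (dvd_refl (X : ℤ⟦X⟧)).neg_right).mul_left_cancel ?_
  rw [qProd_mul_weightGenFun_gordonSet_zero c ha, ← hR, ← hP, hexp]
  ring

theorem weightGenFun_gordonSet_self {k : ℕ} (hk : 0 < k) :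
    weightGenFun opWt (gordonSet k 0 k) =
      weightGenFun opWt (restrictedSet {i | ¬ k ∣ i} {i | ¬ k ∣ i}) := by
  have hX : (X : ℤ⟦X⟧) ∣ X ^ k := dvd_pow_self X hk.ne'
  have hR := weightGenFun_restrictedSet_mul_partProd (A := {i | ¬ k ∣ i}) (B := {i | ¬ k ∣ i})
    (by simp) (by simp)
  have hneg := partProd_setOf_not_dvd_mul_qProd (R := ℤ) (-1) hk
  have hpos := partProd_setOf_not_dvd_mul_qProd (R := ℤ) 1 hk
  have hG := qProd_mul_weightGenFun_gordonSet_zero 0 hk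
  have hθ := qProd_mul_ramanujanTheta_neg_self hX
  simp only [neg_one_mul, one_mul, mul_zero, add_zero] at hneg hpos hG
  refine (isUnit_qProd dvd_rfl (dvd_refl (X : ℤ⟦X⟧)).neg_right).mul_left_cancel ?_
  set P := partProd (R := ℤ) 1 {i | ¬ k ∣ i}
  calc qProd (-X) X * weightGenFun opWt (gordonSet k 0 k)
    _ = P * qProd (-X ^ k) (X ^ k) := by
      rw [hG, ← hpos, mul_assoc, hθ]
    _ = qProd (-X) X * weightGenFun opWt (restrictedSet {i | ¬ k ∣ i} {i | ¬ k ∣ i}) := by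
      rw [← hneg, ← hR]
      ring

end ProductFormulas

/-- Gordon's theorem for overpartitions (Lovejoy; Chen–Sang–Shi):
for `2 ≤ k`, `1 ≤ a ≤ k` and all `n`, the number of overpartitions of `n` with
`f_1 < a` and `f_i + f_{ī} + f_{i+1} < k` for all `i ≥ 1` equals, when `a < k`,
the number of overpartitions of `n` whose non-overlined parts are not congruent to
`0, ±a (mod 2k)`, and, when `a = k`, the number of overpartitions of `n` with no
part divisible by `k`. -/
theorem gordon_overpartitions (k a n : ℕ) (hk : 2 ≤ k) (ha : 1 ≤ a) (hak : a ≤ k) :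
    (a < k →
      Set.ncard {p : (ℕ →₀ ℕ) × (ℕ →₀ ℕ) | IsOverPtn p ∧ opWt p = n ∧
        p.1 1 < a ∧ ∀ i : ℕ, 1 ≤ i → p.1 i + p.2 i + p.1 (i + 1) < k}
      = Set.ncard {p : (ℕ →₀ ℕ) × (ℕ →₀ ℕ) | IsOverPtn p ∧ opWt p = n ∧
        ∀ i : ℕ, 0 < p.1 i →
          i % (2 * k) ≠ 0 ∧ i % (2 * k) ≠ a ∧ i % (2 * k) ≠ 2 * k - a}) ∧
    (a = k →
      Set.ncard {p : (ℕ →₀ ℕ) × (ℕ →₀ ℕ) | IsOverPtn p ∧ opWt p = n ∧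
        p.1 1 < a ∧ ∀ i : ℕ, 1 ≤ i → p.1 i + p.2 i + p.1 (i + 1) < k}
      = Set.ncard {p : (ℕ →₀ ℕ) × (ℕ →₀ ℕ) | IsOverPtn p ∧ opWt p = n ∧
        ∀ i : ℕ, 0 < p.1 i + p.2 i → ¬ k ∣ i}) := by
  constructor
  · intro h
    convert ncard_eq_of_weightGenFun_eq (weightGenFun_gordonSet_of_lt ha h) n using 4 with p p
    · rw [mem_gordonSet_zero_iff, and_right_comm, and_assoc]
    · rw [mem_restrictedSet_setOf_pos_iff, and_right_comm, and_assoc]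
      rfl
  · rintro rfl
    convert ncard_eq_of_weightGenFun_eq (weightGenFun_gordonSet_self ha) n using 4 with p p
    · rw [mem_gordonSet_zero_iff, and_right_comm, and_assoc]
    · rw [mem_restrictedSet_self_iff, and_right_comm, and_assoc]
      rfl
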